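/- arXiv:math/0403250 — 2 statements merged into one kernel-verified Lean document; each statement's English description precedes it below -/
import Mathlib

section
/- (PBW property) The elements g · x_1^{a_1} y_1^{b_1} x_2^{a_2} y_2^{b_2} ⋯ x_N^{a_N} y_N^{b_N}, where g ranges over Γ_N and a_i, b_i over nonnegative integers, form a basis of H_{1,k,c}(Γ_N) as a ℂ-vector space. Equivalently, the linear map ℂ[Γ_N] ⊗ ℂ[x_1,y_1,…,x_N,y_N] → H_{1,k,c}(Γ_N) sending g ⊗ (monomial) to the product g·(monomial in the fixed order above) is a linear isomorphism. -/
noncomputable section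

/-- `SL(2,ℂ)`. -/
abbrev SL2 : Type := Matrix.SpecialLinearGroup (Fin 2) ℂ

/-- The permutation action of `S_N` on `Γ^N`, `(σ • f) i = f (σ⁻¹ i)`. -/
def wphi (Γ : Type) [Group Γ] (N : ℕ) : Equiv.Perm (Fin N) →* MulAut (Fin N → Γ) where
  toFun σ := MulEquiv.arrowCongr σ (MulEquiv.refl Γ)
  map_one' := rfl
  map_mul' _ _ := rfl

/-- The wreath product `Γ_N = S_N ⋉ Γ^N`. -/
abbrev WP (Γ : Type) [Group Γ] (N : ℕ) : Type :=
  (Fin N → Γ) ⋊[wphi Γ N] Equiv.Perm (Fin N)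

/-- `γ_i`: the element `γ ∈ Γ` placed in the `i`-th factor of `Γ^N ⊂ Γ_N`. -/
def tG {Γ : Type} [Group Γ] {N : ℕ} (i : Fin N) (γ : Γ) : WP Γ N :=
  SemidirectProduct.inl (Pi.mulSingle i γ)

/-- The symplectic reflection `s_{ij} γ_i γ_j⁻¹` of type (S). -/
def tS {Γ : Type} [Group Γ] {N : ℕ} (i j : Fin N) (γ : Γ) : WP Γ N :=
  SemidirectProduct.inr (Equiv.swap i j) * tG i γ * (tG j γ)⁻¹

/-- The linear action of the wreath product `Γ_N` (for `Γ ⊂ SL(2,ℂ)`) on `V = L^{⊕N}`,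
`(g · v) i = g.left i • v (g.right⁻¹ i)`. -/
def actL (Γ : Subgroup SL2) (N : ℕ) (g : WP Γ N) :
    (Fin N → Fin 2 → ℂ) →ₗ[ℂ] Fin N → Fin 2 → ℂ :=
  LinearMap.pi fun i =>
    (Matrix.mulVecLin ((g.left i : SL2) : Matrix (Fin 2) (Fin 2) ℂ)).comp
      (LinearMap.proj (g.right⁻¹ i))

noncomputable section

variable (Γ : Subgroup SL2) [Fintype Γ] [DecidableEq Γ] (N : ℕ)

/-- Generator `g ∈ Γ_N` in the free algebra on `Γ_N ⊕ {x_i, y_i}`. -/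
def nG (g : WP Γ N) : FreeAlgebra ℂ (WP Γ N ⊕ Fin N × Fin 2) :=
  FreeAlgebra.ι ℂ (Sum.inl g)

/-- Generator `x_i` (for `p = 0`) resp. `y_i` (for `p = 1`) in the free algebra. -/
def nX (i : Fin N) (p : Fin 2) : FreeAlgebra ℂ (WP Γ N ⊕ Fin N × Fin 2) :=
  FreeAlgebra.ι ℂ (Sum.inr (i, p))

/-- The general vector `v ∈ V = L^{⊕N}` inside the free algebra. -/
def nV (v : Fin N → Fin 2 → ℂ) : FreeAlgebra ℂ (WP Γ N ⊕ Fin N × Fin 2) :=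
  ∑ i : Fin N, ∑ p : Fin 2, v i p • nX Γ N i p

/-- The standard symplectic form `ω_L` on `L = ℂ²`: `ω_L(u,v) = u₀ v₁ - u₁ v₀`. -/
def omL (u v : Fin 2 → ℂ) : ℂ := u 0 * v 1 - u 1 * v 0

/-- The defining relations of the wreath product symplectic reflection algebra
`H_{1,k,c}(Γ_N)`:  the group relations of `Γ_N`, the relations `g v g⁻¹ = g(v)` for
`v ∈ V`, and the relations (R1), (R2) of Gan–Ginzburg. -/
inductive HRel (k : ℂ) (c : Γ → ℂ) :
    FreeAlgebra ℂ (WP Γ N ⊕ Fin N × Fin 2) → FreeAlgebra ℂ (WP Γ N ⊕ Fin N × Fin 2) → Prop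
  | grp_mul (g h : WP Γ N) : HRel k c (nG Γ N g * nG Γ N h) (nG Γ N (g * h))
  | grp_one : HRel k c (nG Γ N 1) 1
  | grp_conj (g : WP Γ N) (v : Fin N → Fin 2 → ℂ) :
      HRel k c (nG Γ N g * nV Γ N v * nG Γ N g⁻¹) (nV Γ N (actL Γ N g v))
  | r1 (i : Fin N) :
      HRel k c (nX Γ N i 0 * nX Γ N i 1 - nX Γ N i 1 * nX Γ N i 0)
        (1 + (k / 2) • ∑ j ∈ Finset.univ.filter (fun j : Fin N => j ≠ i),
            ∑ γ : Γ, nG Γ N (tS i j γ)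
          + ∑ γ ∈ Finset.univ.filter (fun γ : Γ => γ ≠ 1), c γ • nG Γ N (tG i γ))
  | r2 (i j : Fin N) (hij : i ≠ j) (u v : Fin 2 → ℂ) :
      HRel k c (nV Γ N (Pi.single i u) * nV Γ N (Pi.single j v)
          - nV Γ N (Pi.single j v) * nV Γ N (Pi.single i u))
        ((-(k / 2)) • ∑ γ : Γ,
          omL (Matrix.mulVec ((γ : SL2) : Matrix (Fin 2) (Fin 2) ℂ) u) v • nG Γ N (tS i j γ))

/-- The wreath product symplectic reflection algebra `H_{1,k,c}(Γ_N)`. -/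
abbrev HN (k : ℂ) (c : Γ → ℂ) : Type := RingQuot (HRel Γ N k c)

/-- The image of the group element `g ∈ Γ_N` in `H_{1,k,c}(Γ_N)`. -/
def hG (k : ℂ) (c : Γ → ℂ) (g : WP Γ N) : HN Γ N k c :=
  RingQuot.mkAlgHom ℂ (HRel Γ N k c) (nG Γ N g)

/-- The image of `x_i` (`p = 0`) resp. `y_i` (`p = 1`) in `H_{1,k,c}(Γ_N)`. -/
def hX (k : ℂ) (c : Γ → ℂ) (i : Fin N) (p : Fin 2) : HN Γ N k c :=
  RingQuot.mkAlgHom ℂ (HRel Γ N k c) (nX Γ N i p)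

end

noncomputable section

/-- The PBW monomial `g · x₁^{a₁} y₁^{b₁} ⋯ x_N^{a_N} y_N^{b_N}` in `H_{1,k,c}(Γ_N)`,
indexed by `g ∈ Γ_N` and the exponent function `e : Fin N × Fin 2 → ℕ`
(`e (i, 0) = a_i`, `e (i, 1) = b_i`). -/
def pbwMono (Γ : Subgroup SL2) [Fintype Γ] [DecidableEq Γ] (N : ℕ) (k : ℂ) (c : Γ → ℂ)
    (g : WP Γ N) (e : Fin N × Fin 2 → ℕ) : HN Γ N k c :=
  hG Γ N k c g *
    ((List.finRange N).map fun i => hX Γ N k c i 0 ^ e (i, 0) * hX Γ N k c i 1 ^ e (i, 1)).prod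

end

/-!
`H_{1,k,c}(Γ_N)` is a Drinfeld Hecke algebra: it is generated by `Γ_N` and `V` with commutators
`[u, v] = ∑ r, ω_r(u, v) r`, where `r` runs over the reflections of `Γ_N` and each `ω_r` is a
multiple of the pullback of `ω_L` along a map `V → L`.

Sorting a word changes it by shorter words, hence the normal monomials `g · m` span. For their
independence the algebra is made to act on the free module on the normal monomials. The product of
a basis vector with `m` is defined by recursion on the degree, by moving the vector past the
smallest variable of `m`. The defect of the commutator relation vanishes by induction on the
degree: applied to `b l · t` with `l` the smallest index, the Jacobi identity for `b i, b j, b l`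
expresses the defect at `b i, b j` through defects which are already known to vanish. This needs
the Jacobi identity for the right-hand sides of the relations, which holds because `w - r w` also
factors through the map `V → L` that belongs to `r`, and `L` has dimension two.
-/

section DrinfeldHecke

open Module

theorem bilin_eq_zero_of_isAlt_of_lt {K V W ι : Type*} [CommRing K] [AddCommGroup V] [Module K V]
    [AddCommGroup W] [Module K W] [LinearOrder ι] (b : Basis ι K V) {B : V →ₗ[K] V →ₗ[K] W}
    (hB : B.IsAlt) (h : ∀ i j, j < i → B (b i) (b j) = 0) : B = 0 := by
  refine LinearMap.ext_basis b b fun i j => ?_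
  rcases lt_trichotomy i j with hij | rfl | hij
  · rw [← hB.neg, h j i hij, neg_zero, LinearMap.zero_apply, LinearMap.zero_apply]
  · exact hB _
  · exact h i j hij

theorem exists_cons_of_not_forall_le {ι : Type*} [LinearOrder ι] {m : Multiset ι} {i : ι}
    (h : ¬∀ k ∈ m, i ≤ k) : ∃ j t, m = j ::ₘ t ∧ (∀ k ∈ t, j ≤ k) ∧ j < i := by
  push Not at h
  obtain ⟨k, hk, hki⟩ := h
  obtain ⟨j, hj, hmin⟩ := Multiset.exists_min_image (s := m) id (by rintro rfl; simp at hk)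
  obtain ⟨t, rfl⟩ := Multiset.exists_cons_of_mem hj
  exact ⟨j, t, rfl, fun k hk => hmin k (Multiset.mem_cons_of_mem hk), (hmin k hk).trans_lt hki⟩

/-- The input of a Drinfeld (graded) Hecke algebra, the quotient of `T(V) ⋊ G` by the relations
`u v - v u = ∑ r, form r u v • refl r`. The finite set of group elements that occur is indexed by
`X`, with repetitions allowed, and `conj` is the action of `G` on the indices that lifts
conjugation. The conditions `form_conj` and `form_jacobi` are the two obstructions to
the Poincaré–Birkhoff–Witt property. -/
structure DrinfeldHeckeDatum (K G V X : Type*) [CommRing K] [Group G] [AddCommGroup V]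
    [Module K V] where
  ρ : Representation K G V
  refl : X → G
  form : X → V →ₗ[K] V →ₗ[K] K
  conj : G → Equiv.Perm X
  refl_conj (g : G) (r : X) : refl (conj g r) = g * refl r * g⁻¹
  form_conj (g : G) (r : X) (u v : V) : form (conj g r) (ρ g u) (ρ g v) = form r u v
  form_isAlt (r : X) : (form r).IsAlt
  form_jacobi (r : X) (u v w : V) :
    form r u v • (w - ρ (refl r) w) + form r v w • (u - ρ (refl r) u)
      + form r w u • (v - ρ (refl r) v) = 0

variable {K G V X ι A : Type*} [CommRing K] [Group G] [AddCommGroup V] [Module K V]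
  [Ring A] [Algebra K A]

namespace DrinfeldHeckeDatum

variable (D : DrinfeldHeckeDatum K G V X)

section Curvature

variable [Fintype X]

/-- The right-hand side `∑ r, form r u v • refl r` of the commutator relation, evaluated in an
algebra through a homomorphism from the group. -/
def curvature (γ : G →* A) : V →ₗ[K] V →ₗ[K] A :=
  ∑ r, (D.form r).compr₂ (LinearMap.toSpanSingleton K A (γ (D.refl r)))

theorem curvature_apply (γ : G →* A) (u v : V) :
    D.curvature γ u v = ∑ r, D.form r u v • γ (D.refl r) := by
  simp [curvature, LinearMap.sum_apply]

theorem curvature_isAlt (γ : G →* A) : (D.curvature γ).IsAlt := fun u => by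
  simp only [curvature_apply, D.form_isAlt _ u, zero_smul, Finset.sum_const_zero]

theorem grp_mul_curvature (γ : G →* A) (g : G) (u v : V) :
    γ g * D.curvature γ u v = D.curvature γ (D.ρ g u) (D.ρ g v) * γ g := by
  simp only [curvature_apply, Finset.mul_sum, Finset.sum_mul, mul_smul_comm, smul_mul_assoc,
    ← map_mul]
  rw [← Equiv.sum_comp (D.conj g) fun r => D.form r (D.ρ g u) (D.ρ g v) • γ (D.refl r * g)]
  simp only [D.form_conj, D.refl_conj, inv_mul_cancel_right]

/-- The failure of `γ` and `ξ` to satisfy the commutator relation. -/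
def commutatorDefect (γ : G →* A) (ξ : V →ₗ[K] A) : V →ₗ[K] V →ₗ[K] A :=
  (LinearMap.mul K A).compl₁₂ ξ ξ - ((LinearMap.mul K A).compl₁₂ ξ ξ).flip - D.curvature γ

variable (γ : G →* A) (ξ : V →ₗ[K] A)

theorem commutatorDefect_apply (u v : V) :
    D.commutatorDefect γ ξ u v = ξ u * ξ v - ξ v * ξ u - D.curvature γ u v := by
  simp [commutatorDefect]

theorem commutatorDefect_isAlt : (D.commutatorDefect γ ξ).IsAlt := fun u => by
  rw [commutatorDefect_apply, sub_self, zero_sub, D.curvature_isAlt γ u, neg_zero]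

variable {γ ξ}

theorem grp_mul_commutatorDefect (h : ∀ g v, γ g * ξ v = ξ (D.ρ g v) * γ g)
    (g : G) (u v : V) :
    γ g * D.commutatorDefect γ ξ u v = D.commutatorDefect γ ξ (D.ρ g u) (D.ρ g v) * γ g := by
  have comm (u v : V) : γ g * (ξ u * ξ v) = ξ (D.ρ g u) * ξ (D.ρ g v) * γ g := by
    rw [← mul_assoc, h, mul_assoc, h, mul_assoc]
  simp only [commutatorDefect_apply, mul_sub, sub_mul, comm, D.grp_mul_curvature]

section Jacobi

attribute [local instance] LieRing.ofAssociativeRing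

theorem lie_curvature_jacobi (h : ∀ g v, γ g * ξ v = ξ (D.ρ g v) * γ g)
    (u v w : V) :
    ⁅D.curvature γ u v, ξ w⁆ + ⁅D.curvature γ v w, ξ u⁆ + ⁅D.curvature γ w u, ξ v⁆ = 0 := by
  have lie_curvature (u v w : V) : ⁅D.curvature γ u v, ξ w⁆ =
      -∑ r, ξ (D.form r u v • (w - D.ρ (D.refl r) w)) * γ (D.refl r) := by
    rw [Ring.lie_def, curvature_apply, Finset.sum_mul, Finset.mul_sum, ← Finset.sum_sub_distrib,
      ← Finset.sum_neg_distrib]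
    refine Finset.sum_congr rfl fun r _ => ?_
    rw [smul_mul_assoc, h, mul_smul_comm, ← smul_sub, ← sub_mul, ← map_sub, map_smul,
      smul_mul_assoc, ← neg_sub w, map_neg, neg_mul, smul_neg]
  rw [lie_curvature, lie_curvature, lie_curvature, ← neg_add, ← neg_add, neg_eq_zero,
    ← Finset.sum_add_distrib, ← Finset.sum_add_distrib]
  refine Finset.sum_eq_zero fun r _ => ?_
  rw [← add_mul, ← add_mul, ← map_add, ← map_add, D.form_jacobi, map_zero, zero_mul]

theorem lie_commutatorDefect_jacobi (h : ∀ g v, γ g * ξ v = ξ (D.ρ g v) * γ g)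
    (u v w : V) :
    ⁅D.commutatorDefect γ ξ u v, ξ w⁆ + ⁅D.commutatorDefect γ ξ v w, ξ u⁆
      + ⁅D.commutatorDefect γ ξ w u, ξ v⁆ = 0 := by
  have lie_defect (u v w : V) : ⁅D.commutatorDefect γ ξ u v, ξ w⁆ =
      -⁅ξ w, ⁅ξ u, ξ v⁆⁆ - ⁅D.curvature γ u v, ξ w⁆ := by
    rw [commutatorDefect_apply, ← Ring.lie_def, sub_lie, lie_skew]
  calc
    _ = -(⁅ξ u, ⁅ξ v, ξ w⁆⁆ + ⁅ξ v, ⁅ξ w, ξ u⁆⁆ + ⁅ξ w, ⁅ξ u, ξ v⁆⁆)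
        - (⁅D.curvature γ u v, ξ w⁆ + ⁅D.curvature γ v w, ξ u⁆ + ⁅D.curvature γ w u, ξ v⁆) := by
      rw [lie_defect, lie_defect, lie_defect]
      abel
    _ = 0 := by rw [lie_jacobi, D.lie_curvature_jacobi h, neg_zero, sub_zero]

end Jacobi

end Curvature

end DrinfeldHeckeDatum

/-- The free module on the normal monomials `g · m`, `m` a monomial in the variables indexed by
`ι`, encoded as the multiset of its variables. -/
def PBWModule (K G ι : Type*) [CommRing K] : Type _ := G × Multiset ι →₀ K

namespace PBWModule

variable {K G ι : Type*} [CommRing K]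

instance : AddCommGroup (PBWModule K G ι) := inferInstanceAs (AddCommGroup (_ →₀ K))

instance : Module K (PBWModule K G ι) := inferInstanceAs (Module K (_ →₀ K))

variable (K G ι) in
/-- The basis of monomials. -/
def basis : Basis (G × Multiset ι) K (PBWModule K G ι) := .ofRepr (.refl K _)

/-- The basis vector `g · m`. -/
def mono (g : G) (m : Multiset ι) : PBWModule K G ι := basis K G ι (g, m)

variable (K G ι) in
/-- The span of the monomials `g · m` with `deg m < n`. -/
def degreeLT (n : ℕ) : Submodule K (PBWModule K G ι) :=
  Submodule.span K (basis K G ι '' {p | p.2.card < n})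

theorem mono_mem_degreeLT {g : G} {m : Multiset ι} {n : ℕ} (h : m.card < n) :
    mono g m ∈ degreeLT K G ι n :=
  Submodule.subset_span ⟨(g, m), h, rfl⟩

theorem degreeLT_le {n : ℕ} {S : Submodule K (PBWModule K G ι)}
    (h : ∀ g (m : Multiset ι), m.card < n → mono g m ∈ S) : degreeLT K G ι n ≤ S := by
  rw [degreeLT, Submodule.span_le]
  rintro _ ⟨⟨g, m⟩, hm, rfl⟩
  exact h g m hm

theorem degreeLT_mono : Monotone (degreeLT K G ι) := fun _ _ h =>
  degreeLT_le fun _ _ hm => mono_mem_degreeLT (hm.trans_le h)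

theorem exists_mem_degreeLT (x : PBWModule K G ι) : ∃ n, x ∈ degreeLT K G ι n := by
  rw [← Submodule.mem_iSup_of_directed _ degreeLT_mono.directed_le]
  refine Submodule.span_le.2 ?_ ((basis K G ι).mem_span x)
  rintro _ ⟨⟨g, m⟩, rfl⟩
  exact Submodule.mem_iSup_of_mem (m.card + 1) (mono_mem_degreeLT m.card.lt_succ_self)

variable [Group G]

variable (K G ι) in
/-- The group acts by left translation. -/
def translate : G →* End K (PBWModule K G ι) where
  toFun g := (basis K G ι).constr K fun p => mono (g * p.1) p.2
  map_one' := (basis K G ι).ext fun p => by simp [mono]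
  map_mul' g h := (basis K G ι).ext fun p => by simp [mono, mul_assoc]

theorem translate_mono (g h : G) (m : Multiset ι) :
    translate K G ι g (mono h m) = mono (g * h) m :=
  (basis K G ι).constr_basis K _ (h, m)

theorem mono_eq_translate (g : G) (m : Multiset ι) :
    (mono g m : PBWModule K G ι) = translate K G ι g (mono 1 m) := by
  rw [translate_mono, mul_one]

theorem translate_mem_degreeLT (g : G) {n : ℕ} {x : PBWModule K G ι}
    (hx : x ∈ degreeLT K G ι n) : translate K G ι g x ∈ degreeLT K G ι n := by
  refine degreeLT_le (S := (degreeLT K G ι n).comap (translate K G ι g)) (fun h m hm => ?_) hx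
  rw [Submodule.mem_comap, translate_mono]
  exact mono_mem_degreeLT hm

end PBWModule

open PBWModule

namespace DrinfeldHeckeDatum

variable (D : DrinfeldHeckeDatum K G V X) (b : Basis ι K V)
  (τ : Multiset ι → ι → PBWModule K G ι)

/-- The operators on `PBWModule K G ι` by which the vectors of `V` act once it is prescribed that
`b i · m = (i ::ₘ m) + τ m i`. On the remaining basis vectors they are determined by the relation
`v g = g (g⁻¹ v)`. -/
def vecOp : V →ₗ[K] End K (PBWModule K G ι) :=
  ((basis K G ι).constr K fun p => translate K G ι p.1 ∘ₗ
    b.constr K (fun i => mono 1 (i ::ₘ p.2) + τ p.2 i) ∘ₗ D.ρ p.1⁻¹).flip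

theorem vecOp_mono (v : V) (g : G) (m : Multiset ι) : D.vecOp b τ v (mono g m) =
    translate K G ι g (b.constr K (fun i => mono 1 (i ::ₘ m) + τ m i) (D.ρ g⁻¹ v)) := by
  rw [vecOp, LinearMap.flip_apply, mono, Basis.constr_basis]
  rfl

theorem vecOp_basis_mono_one (i : ι) (m : Multiset ι) :
    D.vecOp b τ (b i) (mono 1 m) = mono 1 (i ::ₘ m) + τ m i := by
  simp [vecOp_mono]

theorem translate_mul_vecOp (g : G) (v : V) :
    translate K G ι g * D.vecOp b τ v = D.vecOp b τ (D.ρ g v) * translate K G ι g := by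
  refine (basis K G ι).ext fun ⟨h, m⟩ => ?_
  change translate K G ι g (D.vecOp b τ v (mono h m)) =
    D.vecOp b τ (D.ρ g v) (translate K G ι g (mono h m))
  rw [translate_mono, vecOp_mono, vecOp_mono, mul_inv_rev,
    map_mul (translate K G ι), map_mul D.ρ, Module.End.mul_apply, Module.End.mul_apply,
    D.ρ.inv_self_apply]

variable {τ}

theorem vecOp_congr {τ' : Multiset ι → ι → PBWModule K G ι} {n : ℕ}
    (h : ∀ m : Multiset ι, m.card < n → τ m = τ' m) (v : V) {x : PBWModule K G ι}
    (hx : x ∈ degreeLT K G ι n) : D.vecOp b τ v x = D.vecOp b τ' v x := by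
  refine degreeLT_le (S := LinearMap.eqLocus (D.vecOp b τ v) (D.vecOp b τ' v))
    (fun g m hm => ?_) hx
  rw [LinearMap.mem_eqLocus, vecOp_mono, vecOp_mono, h m hm]

theorem vecOp_mem_degreeLT {n : ℕ}
    (h : ∀ m : Multiset ι, m.card < n → ∀ i, τ m i ∈ degreeLT K G ι (n + 1)) (v : V)
    {x : PBWModule K G ι} (hx : x ∈ degreeLT K G ι n) :
    D.vecOp b τ v x ∈ degreeLT K G ι (n + 1) := by
  refine degreeLT_le (S := (degreeLT K G ι (n + 1)).comap (D.vecOp b τ v)) (fun g m hm => ?_) hx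
  rw [Submodule.mem_comap, vecOp_mono]
  refine translate_mem_degreeLT _ ?_
  rw [b.constr_apply]
  refine Submodule.sum_mem _ fun i _ => Submodule.smul_mem _ _ (Submodule.add_mem _ ?_ (h m hm i))
  exact mono_mem_degreeLT (by simpa using hm)

variable [Fintype X]

theorem curvature_translate_mem_degreeLT (u v : V) {n : ℕ} {x : PBWModule K G ι}
    (hx : x ∈ degreeLT K G ι n) : D.curvature (translate K G ι) u v x ∈ degreeLT K G ι n := by
  rw [curvature_apply, LinearMap.sum_apply]
  exact Submodule.sum_mem _ fun r _ => Submodule.smul_mem _ _ (translate_mem_degreeLT _ hx)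

variable [LinearOrder ι]

/-- The lower-order terms of the normal form of `b i · m`, obtained by moving `b i` past the
smallest variable `j` of `m = j ::ₘ t`, that is from
`b i · (b j · t) = b j · (b i · t) + curvature (b i) (b j) · t`. -/
def correction (m : Multiset ι) (i : ι) : PBWModule K G ι :=
  match _hm : m.sort with
  | [] => 0
  | j :: t =>
    if i ≤ j then 0
    else D.vecOp b (fun m' k => if _h : m'.card < m.card then correction m' k else 0) (b j)
        (correction t i) + D.curvature (translate K G ι) (b i) (b j) (mono 1 t)
termination_by m.card
decreasing_by
  · exact _h
  · rw [← Multiset.length_sort (s := m) (r := (· ≤ ·)), _hm]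
    simp

theorem correction_cons {j : ι} {t : Multiset ι} (hj : ∀ k ∈ t, j ≤ k) (i : ι) :
    D.correction b (j ::ₘ t) i =
      if i ≤ j then 0
      else D.vecOp b (fun m k => if m.card < t.card + 1 then D.correction b m k else 0) (b j)
        (D.correction b t i) + D.curvature (translate K G ι) (b i) (b j) (mono 1 t) := by
  rw [correction]
  split
  case h_1 h => simp [Multiset.sort_cons _ _ _ hj] at h
  case h_2 h =>
    rw [Multiset.sort_cons _ _ _ hj, List.cons.injEq] at h
    obtain ⟨rfl, rfl⟩ := h
    simp

theorem correction_of_le {m : Multiset ι} {i : ι} (h : ∀ k ∈ m, i ≤ k) :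
    D.correction b m i = 0 := by
  rw [correction]
  split
  case h_1 => rfl
  case h_2 j t hm => exact if_pos (h j ((Multiset.mem_sort (r := (· ≤ ·))).1 (by simp [hm])))

theorem correction_mem_degreeLT (m : Multiset ι) (i : ι) :
    D.correction b m i ∈ degreeLT K G ι m.card := by
  induction h : m.card using Nat.strong_induction_on generalizing m i with
  | _ n ih =>
    subst h
    by_cases hi : ∀ k ∈ m, i ≤ k
    · rw [D.correction_of_le b hi]
      exact Submodule.zero_mem _
    obtain ⟨j, t, rfl, hj, hji⟩ := exists_cons_of_not_forall_le hi
    have ht : t.card < (j ::ₘ t).card := by simp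
    rw [D.correction_cons b hj, if_neg hji.not_ge, Multiset.card_cons]
    refine Submodule.add_mem _ (D.vecOp_mem_degreeLT b (fun m hm k => ?_) _ (ih _ ht t i rfl))
      (D.curvature_translate_mem_degreeLT _ _ (mono_mem_degreeLT t.card.lt_succ_self))
    rw [if_pos (hm.trans t.card.lt_succ_self)]
    exact degreeLT_mono (by lia) (ih _ (hm.trans ht) m k rfl)

/-- The action of `V` on `PBWModule K G ι` by left multiplication. -/
def act : V →ₗ[K] End K (PBWModule K G ι) := D.vecOp b (D.correction b)

theorem correction_cons_of_lt {i j : ι} {t : Multiset ι} (hj : ∀ k ∈ t, j ≤ k) (hji : j < i) :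
    D.correction b (j ::ₘ t) i =
      D.act b (b j) (D.correction b t i)
        + D.curvature (translate K G ι) (b i) (b j) (mono 1 t) := by
  rw [D.correction_cons b hj, if_neg hji.not_ge, act,
    D.vecOp_congr b (τ' := D.correction b) (n := t.card) _ _ (D.correction_mem_degreeLT b t i)]
  intro m hm
  funext k
  exact if_pos (hm.trans t.card.lt_succ_self)

theorem act_mono_one (i : ι) (m : Multiset ι) :
    D.act b (b i) (mono 1 m) = mono 1 (i ::ₘ m) + D.correction b m i :=
  D.vecOp_basis_mono_one b _ i m

theorem act_mono_one_of_le {i : ι} {m : Multiset ι} (h : ∀ k ∈ m, i ≤ k) :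
    D.act b (b i) (mono 1 m) = mono 1 (i ::ₘ m) := by
  rw [act_mono_one, D.correction_of_le b h, add_zero]

theorem translate_mul_act (g : G) (v : V) :
    translate K G ι g * D.act b v = D.act b (D.ρ g v) * translate K G ι g :=
  D.translate_mul_vecOp b _ g v

/-- The failure of `D.act b` to satisfy the commutator relation. -/
abbrev actDefect : V →ₗ[K] V →ₗ[K] End K (PBWModule K G ι) :=
  D.commutatorDefect (translate K G ι) (D.act b)

theorem actDefect_isAlt : (D.actDefect b).IsAlt :=
  D.commutatorDefect_isAlt _ _

theorem actDefect_translate (g : G) (u v : V) (x : PBWModule K G ι) :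
    D.actDefect b u v (translate K G ι g x) =
      translate K G ι g (D.actDefect b (D.ρ g⁻¹ u) (D.ρ g⁻¹ v) x) := by
  have h := LinearMap.congr_fun (D.grp_mul_commutatorDefect
    (D.translate_mul_act b) g (D.ρ g⁻¹ u) (D.ρ g⁻¹ v)) x
  rw [D.ρ.self_inv_apply, D.ρ.self_inv_apply] at h
  exact h.symm

theorem actDefect_jacobi (u v w : V) (x : PBWModule K G ι) :
    D.actDefect b u v (D.act b w x) - D.act b w (D.actDefect b u v x)
      + (D.actDefect b v w (D.act b u x) - D.act b u (D.actDefect b v w x))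
      + (D.actDefect b w u (D.act b v x) - D.act b v (D.actDefect b w u x)) = 0 :=
  LinearMap.congr_fun (D.lie_commutatorDefect_jacobi
    (D.translate_mul_act b) u v w) x

theorem actDefect_mono_one_of_le {i j : ι} {m : Multiset ι} (hji : j < i) (hj : ∀ k ∈ m, j ≤ k) :
    D.actDefect b (b i) (b j) (mono 1 m) = 0 := by
  have hj' : ∀ k ∈ i ::ₘ m, j ≤ k := by simpa using ⟨hji.le, hj⟩
  have act_act : D.act b (b i) (D.act b (b j) (mono 1 m)) =
      D.act b (b j) (D.act b (b i) (mono 1 m))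
        + D.curvature (translate K G ι) (b i) (b j) (mono 1 m) := by
    rw [D.act_mono_one_of_le b hj, D.act_mono_one, D.correction_cons_of_lt b hj hji,
      D.act_mono_one, map_add, D.act_mono_one_of_le b hj', Multiset.cons_swap, add_assoc]
  rw [commutatorDefect_apply, LinearMap.sub_apply, LinearMap.sub_apply, Module.End.mul_apply,
    Module.End.mul_apply, act_act, add_sub_cancel_left, sub_self]

theorem actDefect_mono_one {n : ℕ} (ih : ∀ x ∈ degreeLT K G ι n, ∀ u v, D.actDefect b u v x = 0)
    {m : Multiset ι} (hm : m.card ≤ n) {i j : ι} (hji : j < i) :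
    D.actDefect b (b i) (b j) (mono 1 m) = 0 := by
  by_cases hj : ∀ k ∈ m, j ≤ k
  · exact D.actDefect_mono_one_of_le b hji hj
  obtain ⟨l, t, rfl, hl, hlj⟩ := exists_cons_of_not_forall_le hj
  rw [Multiset.card_cons] at hm
  have ht : mono 1 t ∈ degreeLT K G ι n := mono_mem_degreeLT hm
  have defect_act {p q : ι} (hlp : l < p) (hlq : l < q) :
      D.actDefect b (b p) (b l) (D.act b (b q) (mono 1 t)) = 0 := by
    have hlqt : ∀ k ∈ q ::ₘ t, l ≤ k := by simpa using ⟨hlq.le, hl⟩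
    rw [act_mono_one, map_add, D.actDefect_mono_one_of_le b hlp hlqt, zero_add]
    exact ih _ (degreeLT_mono (by lia) (D.correction_mem_degreeLT b t q)) _ _
  have jacobi := D.actDefect_jacobi b (b i) (b j) (b l) (mono 1 t)
  simpa only [← (D.actDefect_isAlt b).neg (b i) (b l), ih _ ht, LinearMap.neg_apply, neg_zero,
    defect_act hlj (hlj.trans hji), defect_act (hlj.trans hji) hlj, map_zero, sub_zero, add_zero,
    D.act_mono_one_of_le b hl] using jacobi

theorem actDefect_eq_zero : D.actDefect b = 0 := by
  suffices ∀ n, ∀ x ∈ degreeLT K G ι n, ∀ u v, D.actDefect b u v x = 0 by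
    refine LinearMap.ext₂ fun u v => LinearMap.ext fun x => ?_
    obtain ⟨n, hx⟩ := exists_mem_degreeLT x
    exact this n x hx u v
  intro n
  induction n with
  | zero => simp [degreeLT]
  | succ n ih =>
    intro x hx u v
    refine degreeLT_le (S := LinearMap.ker (D.actDefect b u v)) (fun g m hm => ?_) hx
    have defect_mono_one : (D.actDefect b).compr₂ (LinearMap.applyₗ (mono 1 m)) = 0 :=
      bilin_eq_zero_of_isAlt_of_lt b (fun u => by simp [D.actDefect_isAlt b u])
        fun i j hji => D.actDefect_mono_one b ih (Nat.le_of_lt_succ hm) hji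
    rw [LinearMap.mem_ker, mono_eq_translate, actDefect_translate]
    exact (congrArg _ (LinearMap.congr_fun₂ defect_mono_one _ _)).trans (map_zero _)

end DrinfeldHeckeDatum

/-- A pair of maps from `G` and `V` to an algebra which satisfies the defining relations of the
Drinfeld Hecke algebra of `D`. -/
structure HeckeRealization (D : DrinfeldHeckeDatum K G V X) (A : Type*) [Fintype X] [Ring A]
    [Algebra K A] where
  grp : G →* A
  vec : V →ₗ[K] A
  grp_mul_vec (g : G) (v : V) : grp g * vec v = vec (D.ρ g v) * grp g
  commutator (u v : V) : vec u * vec v - vec v * vec u = D.curvature grp u v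

variable [Fintype X] {D : DrinfeldHeckeDatum K G V X}

namespace HeckeRealization

variable (R : HeckeRealization D A) (b : Basis ι K V)

/-- The product of the basis vectors listed in `l`. -/
def word (l : List ι) : A := (l.map fun i => R.vec (b i)).prod

theorem word_cons (i : ι) (l : List ι) : R.word b (i :: l) = R.vec (b i) * R.word b l := by
  simp [word]

/-- The span of the products `g · b i₁ ⋯ b iₖ` with `k < n`, in any order of the factors. -/
def wordSpan (n : ℕ) : Submodule K A :=
  Submodule.span K {a | ∃ g l, l.length < n ∧ R.grp g * R.word b l = a}

variable {R} in
theorem grp_mul_word_mem_wordSpan (g : G) {l : List ι} {n : ℕ} (hl : l.length < n) :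
    R.grp g * R.word b l ∈ R.wordSpan b n :=
  Submodule.subset_span ⟨g, l, hl, rfl⟩

theorem wordSpan_mono : Monotone (R.wordSpan b) := fun _ _ h =>
  Submodule.span_mono fun _ ⟨g, l, hl, hx⟩ => ⟨g, l, hl.trans_le h, hx⟩

theorem wordSpan_le {n : ℕ} {S : Submodule K A}
    (h : ∀ g l, l.length < n → R.grp g * R.word b l ∈ S) : R.wordSpan b n ≤ S := by
  rw [wordSpan, Submodule.span_le]
  rintro _ ⟨g, l, hl, rfl⟩
  exact h g l hl

theorem grp_mul_mem_wordSpan (g : G) {n : ℕ} {x : A} (hx : x ∈ R.wordSpan b n) :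
    R.grp g * x ∈ R.wordSpan b n := by
  refine R.wordSpan_le b (S := (R.wordSpan b n).comap (LinearMap.mulLeft K (R.grp g)))
    (fun h l hl => ?_) hx
  rw [Submodule.mem_comap, LinearMap.mulLeft_apply, ← mul_assoc, ← map_mul]
  exact grp_mul_word_mem_wordSpan b _ hl

theorem vec_mul_word_mem_wordSpan (v : V) {l : List ι} {n : ℕ} (hl : l.length < n) :
    R.vec v * R.word b l ∈ R.wordSpan b (n + 1) := by
  suffices ⊤ ≤ (R.wordSpan b (n + 1)).comap (LinearMap.mulRight K (R.word b l) ∘ₗ R.vec) from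
    this Submodule.mem_top
  rw [← b.span_eq, Submodule.span_le]
  rintro _ ⟨i, rfl⟩
  have h := grp_mul_word_mem_wordSpan (R := R) b 1 (l := i :: l) (Nat.succ_lt_succ hl)
  rwa [map_one, one_mul, word_cons] at h

theorem vec_mul_mem_wordSpan (v : V) {n : ℕ} {x : A} (hx : x ∈ R.wordSpan b n) :
    R.vec v * x ∈ R.wordSpan b (n + 1) := by
  refine R.wordSpan_le b (S := (R.wordSpan b (n + 1)).comap (LinearMap.mulLeft K (R.vec v)))
    (fun g l hl => ?_) hx
  have vec_mul_grp : R.vec v * R.grp g = R.grp g * R.vec (D.ρ g⁻¹ v) := by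
    rw [R.grp_mul_vec, D.ρ.self_inv_apply]
  rw [Submodule.mem_comap, LinearMap.mulLeft_apply, ← mul_assoc, vec_mul_grp, mul_assoc]
  exact R.grp_mul_mem_wordSpan b g (R.vec_mul_word_mem_wordSpan b _ hl)

theorem word_sub_word_mem_wordSpan {l l' : List ι} (h : l.Perm l') :
    R.word b l - R.word b l' ∈ R.wordSpan b l.length := by
  induction h with
  | nil => rw [sub_self]; exact Submodule.zero_mem _
  | cons i _ ih =>
    rw [word_cons, word_cons, ← mul_sub]
    exact R.vec_mul_mem_wordSpan b _ ih
  | swap i j l =>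
    have swap_eq : R.word b (j :: i :: l) - R.word b (i :: j :: l) =
        ∑ r, D.form r (b j) (b i) • (R.grp (D.refl r) * R.word b l) := by
      simp only [word_cons, ← mul_assoc, ← sub_mul, R.commutator, D.curvature_apply,
        Finset.sum_mul, smul_mul_assoc]
    rw [swap_eq]
    exact Submodule.sum_mem _ fun r _ => Submodule.smul_mem _ _
      (grp_mul_word_mem_wordSpan b _ (by simp))
  | trans h₁ _ ih₁ ih₂ =>
    rw [← h₁.length_eq] at ih₂
    simpa using Submodule.add_mem _ ih₁ ih₂

end HeckeRealization

variable [LinearOrder ι]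

/-- The realization by left multiplications on the module of normal monomials. -/
def DrinfeldHeckeDatum.normalRealization (D : DrinfeldHeckeDatum K G V X) (b : Basis ι K V) :
    HeckeRealization D (End K (PBWModule K G ι)) where
  grp := translate K G ι
  vec := D.act b
  grp_mul_vec := D.translate_mul_act b
  commutator u v := by
    rw [← sub_eq_zero, ← D.commutatorDefect_apply]
    exact LinearMap.congr_fun₂ (D.actDefect_eq_zero b) u v

namespace HeckeRealization

variable (R : HeckeRealization D A) (b : Basis ι K V)

/-- The normal monomial `g · b i₁ ⋯ b iₙ`, where `i₁ ≤ ⋯ ≤ iₙ` are the elements of a multiset. -/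
def monomial (p : G × Multiset ι) : A := R.grp p.1 * R.word b p.2.sort

theorem normalRealization_word_mono {l : List ι} (hl : l.Pairwise (· ≤ ·)) :
    (D.normalRealization b).word b l (mono 1 0) = mono 1 (l : Multiset ι) := by
  induction l with
  | nil => rfl
  | cons i l ih =>
    rw [List.pairwise_cons] at hl
    rw [word_cons, Module.End.mul_apply, ih hl.2]
    exact D.act_mono_one_of_le b hl.1

theorem normalRealization_monomial_mono (p : G × Multiset ι) :
    (D.normalRealization b).monomial b p (mono 1 0) = basis K G ι p := by
  rw [monomial, Module.End.mul_apply, normalRealization_word_mono b (p.2.pairwise_sort _),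
    Multiset.sort_eq]
  exact (mono_eq_translate p.1 p.2).symm

variable {R} in
theorem linearIndependent_monomial (f : A →ₐ[K] End K (PBWModule K G ι))
    (hgrp : ∀ g, f (R.grp g) = (D.normalRealization b).grp g)
    (hvec : ∀ v, f (R.vec v) = (D.normalRealization b).vec v) :
    LinearIndependent K (R.monomial b) := by
  have map_monomial (p : G × Multiset ι) :
      f (R.monomial b p) = (D.normalRealization b).monomial b p := by
    simp [monomial, word, map_list_prod, hgrp, hvec, Function.comp_def]
  refine .of_comp (LinearMap.applyₗ (mono 1 0) ∘ₗ f.toLinearMap) ?_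
  have map_monomial_mono : (LinearMap.applyₗ (mono 1 0) ∘ₗ f.toLinearMap) ∘ R.monomial b =
      basis K G ι := funext fun p =>
    (congrArg (· (mono 1 0)) (map_monomial p)).trans (normalRealization_monomial_mono b p)
  rw [map_monomial_mono]
  exact (basis K G ι).linearIndependent

theorem wordSpan_le_span_monomial (n : ℕ) :
    R.wordSpan b n ≤ Submodule.span K (Set.range (R.monomial b)) := by
  induction n with
  | zero => exact R.wordSpan_le b fun _ _ h => absurd h (Nat.not_lt_zero _)
  | succ n ih =>
    refine R.wordSpan_le b fun g l hl => ?_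
    have hperm : l.Perm (Multiset.sort (l : Multiset ι)) :=
      Multiset.coe_eq_coe.1 (Multiset.sort_eq _ _).symm
    have hsub := R.grp_mul_mem_wordSpan b g (R.word_sub_word_mem_wordSpan b hperm)
    rw [mul_sub] at hsub
    have hmono : R.monomial b (g, (l : Multiset ι)) ∈ Submodule.span K (Set.range (R.monomial b)) :=
      Submodule.subset_span ⟨_, rfl⟩
    exact (Submodule.sub_mem_iff_left _ hmono).1
      (ih (R.wordSpan_mono b (Nat.le_of_lt_succ hl) hsub))

theorem span_monomial_eq_top
    (h : Algebra.adjoin K (Set.range R.grp ∪ Set.range R.vec) = ⊤) :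
    Submodule.span K (Set.range (R.monomial b)) = ⊤ := by
  set S := Submodule.span K (Set.range (R.monomial b))
  have one_mem : 1 ∈ S := Submodule.subset_span ⟨(1, 0), by simp [monomial, word]⟩
  have exists_mem_wordSpan {x : A} (hx : x ∈ S) : ∃ n, x ∈ R.wordSpan b n := by
    rw [← Submodule.mem_iSup_of_directed _ (R.wordSpan_mono b).directed_le]
    refine Submodule.span_le.2 ?_ hx
    rintro _ ⟨⟨g, m⟩, rfl⟩
    exact Submodule.mem_iSup_of_mem _ (grp_mul_word_mem_wordSpan b g (Nat.lt_succ_self _))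
  have mul_mem (a : A) : ∀ x ∈ S, a * x ∈ S := by
    have ha : a ∈ Algebra.adjoin K (Set.range R.grp ∪ Set.range R.vec) := h ▸ Algebra.mem_top
    induction ha using Algebra.adjoin_induction with
    | mem a ha =>
      intro x hx
      obtain ⟨n, hn⟩ := exists_mem_wordSpan hx
      rcases ha with ⟨g, rfl⟩ | ⟨v, rfl⟩
      · exact R.wordSpan_le_span_monomial b n (R.grp_mul_mem_wordSpan b g hn)
      · exact R.wordSpan_le_span_monomial b _ (R.vec_mul_mem_wordSpan b v hn)
    | algebraMap r =>
      intro x hx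
      rw [← Algebra.smul_def]
      exact S.smul_mem r hx
    | add a a' _ _ ih ih' =>
      intro x hx
      rw [add_mul]
      exact S.add_mem (ih x hx) (ih' x hx)
    | mul a a' _ _ ih ih' =>
      intro x hx
      rw [mul_assoc]
      exact ih _ (ih' x hx)
  exact Submodule.eq_top_iff'.2 fun a => mul_one a ▸ mul_mem a 1 one_mem

end HeckeRealization

end DrinfeldHecke

section WreathProduct

open Module

/-- The symplectic form `omL` as a bilinear map. -/
def symplForm : (Fin 2 → ℂ) →ₗ[ℂ] (Fin 2 → ℂ) →ₗ[ℂ] ℂ :=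
  LinearMap.mk₂ ℂ omL (fun _ _ _ => by simp [omL]; ring) (fun _ _ _ => by simp [omL]; ring)
    (fun _ _ _ => by simp [omL]; ring) (fun _ _ _ => by simp [omL]; ring)

theorem symplForm_apply (u v : Fin 2 → ℂ) : symplForm u v = u 0 * v 1 - u 1 * v 0 := rfl

theorem symplForm_single_zero_one : symplForm (Pi.single 0 1) (Pi.single 1 1) = 1 := by
  simp [symplForm_apply]

theorem symplForm_isAlt : symplForm.IsAlt := fun u => by
  rw [symplForm_apply, mul_comm, sub_self]

theorem symplForm_jacobi (u v w : Fin 2 → ℂ) :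
    symplForm u v • w + symplForm v w • u + symplForm w u • v = 0 := by
  ext p
  fin_cases p <;> simp [symplForm_apply] <;> ring

variable {Γ : Subgroup SL2} {N : ℕ}

variable (Γ) in
/-- The tautological representation of `Γ` on `L = ℂ²`. -/
def stdRep : Representation ℂ Γ (Fin 2 → ℂ) where
  toFun γ := Matrix.mulVecLin ((γ : SL2) : Matrix (Fin 2) (Fin 2) ℂ)
  map_one' := by simp [Module.End.one_eq_id]
  map_mul' γ δ := by simp [Matrix.mulVecLin_mul, Module.End.mul_eq_comp]

theorem symplForm_stdRep (γ : Γ) (u v : Fin 2 → ℂ) :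
    symplForm (stdRep Γ γ u) (stdRep Γ γ v) = symplForm u v := by
  have hdet := (γ : SL2).2
  rw [Matrix.det_fin_two] at hdet
  simp only [symplForm_apply, stdRep, MonoidHom.coe_mk, OneHom.coe_mk, Matrix.mulVecLin_apply,
    Matrix.mulVec, dotProduct, Fin.sum_univ_two]
  linear_combination (u 0 * v 1 - u 1 * v 0) * hdet

theorem symplForm_stdRep_inv (γ : Γ) (u v : Fin 2 → ℂ) :
    symplForm u (stdRep Γ γ⁻¹ v) = symplForm (stdRep Γ γ u) v := by
  rw [← symplForm_stdRep γ, Representation.self_inv_apply]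

theorem actL_apply (g : WP Γ N) (v : Fin N → Fin 2 → ℂ) (i : Fin N) :
    actL Γ N g v i = stdRep Γ (g.left i) (v (g.right⁻¹ i)) := rfl

theorem wphi_apply (σ : Equiv.Perm (Fin N)) (f : Fin N → Γ) (i : Fin N) :
    wphi Γ N σ f i = f (σ⁻¹ i) := rfl

variable (Γ N) in
/-- The representation `actL` of `Γ_N` on `V = L^{⊕N}`. -/
def wreathRep : Representation ℂ (WP Γ N) (Fin N → Fin 2 → ℂ) where
  toFun := actL Γ N
  map_one' := LinearMap.ext fun v => funext fun i => by simp [actL_apply]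
  map_mul' g h := LinearMap.ext fun v => funext fun i => by simp [actL_apply, wphi_apply]

theorem wreathRep_apply (g : WP Γ N) (v : Fin N → Fin 2 → ℂ) (i : Fin N) :
    wreathRep Γ N g v i = stdRep Γ (g.left i) (v (g.right⁻¹ i)) := rfl

theorem tS_eq (i j : Fin N) (γ : Γ) :
    tS i j γ = ⟨Pi.mulSingle j γ * Pi.mulSingle i γ⁻¹, Equiv.swap i j⟩ := by
  rw [tS, tG, tG, ← map_inv, Pi.mulSingle_inv]
  ext a
  · have swap_eq_iff (l : Fin N) : Equiv.swap i j a = l ↔ a = Equiv.swap i j l := by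
      rw [Equiv.swap_apply_eq_iff]
    simp [wphi_apply, Pi.mulSingle_apply, swap_eq_iff]
  · simp

theorem tS_symm {i j : Fin N} (hij : i ≠ j) (γ : Γ) : tS j i γ⁻¹ = tS i j γ := by
  rw [tS_eq, tS_eq, inv_inv, Equiv.swap_comm, (Pi.mulSingle_commute hij.symm _ _).eq]

/-- Indices of the reflections of `Γ_N`: `(i, γ)` for `γ_i` and `(i, j, γ)` for `s_{ij} γ_i γ_j⁻¹`.
The value `γ = 1` is included in the first family to account for the constant term of (R1), the
triples with `i = j` get the coefficient `0`, and each reflection of the second family occurs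
twice, as `(i, j, γ)` and as `(j, i, γ⁻¹)`. -/
abbrev ReflIndex (Γ : Subgroup SL2) (N : ℕ) : Type := (Fin N × Γ) ⊕ (Fin N × Fin N × Γ)

namespace ReflIndex

/-- The group element with the given index. -/
def elt : ReflIndex Γ N → WP Γ N
  | .inl (i, γ) => tG i γ
  | .inr (i, j, γ) => tS i j γ

/-- The linear map along which `symplForm` is pulled back to give, up to a scalar, the form
attached to a reflection. -/
def coord : ReflIndex Γ N → (Fin N → Fin 2 → ℂ) →ₗ[ℂ] (Fin 2 → ℂ)
  | .inl (i, _) => .proj i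
  | .inr (i, j, γ) => .proj i - stdRep Γ γ⁻¹ ∘ₗ .proj j

/-- The scalar of the form attached to a reflection. It is `k / 4` and not `k / 2` for the
reflections that occur twice. -/
def coeff [DecidableEq Γ] (k : ℂ) (c : Γ → ℂ) : ReflIndex Γ N → ℂ
  | .inl (_, γ) => Function.update c 1 1 γ
  | .inr (i, j, _) => if i = j then 0 else k / 4

/-- The permutation of the indices which corresponds to conjugation by `g`. -/
def conj (g : WP Γ N) : Equiv.Perm (ReflIndex Γ N) :=
  .sumCongr (.prodShear g.right fun i => (MulAut.conj (g.left (g.right i))).toEquiv)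
    (.prodShear g.right fun i => .prodShear g.right fun j =>
      (Equiv.mulLeft (g.left (g.right j))).trans (Equiv.mulRight (g.left (g.right i))⁻¹))

theorem conj_inl (g : WP Γ N) (i : Fin N) (γ : Γ) : conj g (.inl (i, γ)) =
    .inl (g.right i, g.left (g.right i) * γ * (g.left (g.right i))⁻¹) := rfl

theorem conj_inr (g : WP Γ N) (i j : Fin N) (γ : Γ) : conj g (.inr (i, j, γ)) =
    .inr (g.right i, g.right j, g.left (g.right j) * γ * (g.left (g.right i))⁻¹) := rfl

theorem coord_inr_apply (i j : Fin N) (γ : Γ) (v : Fin N → Fin 2 → ℂ) :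
    coord (.inr (i, j, γ)) v = v i - stdRep Γ γ⁻¹ (v j) := rfl

theorem symplForm_coord_inr (i j : Fin N) (γ : Γ) (u v : Fin N → Fin 2 → ℂ) :
    symplForm (coord (.inr (i, j, γ)) u) (coord (.inr (i, j, γ)) v) =
      symplForm (u i) (v i) - symplForm (stdRep Γ γ (u i)) (v j)
        + (symplForm (u j) (v j) - symplForm (stdRep Γ γ⁻¹ (u j)) (v i)) := by
  simp only [coord_inr_apply, map_sub, LinearMap.sub_apply, symplForm_stdRep_inv,
    Representation.self_inv_apply]
  ring

theorem elt_conj (g : WP Γ N) (r : ReflIndex Γ N) : elt (conj g r) = g * elt r * g⁻¹ := by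
  rw [eq_mul_inv_iff_mul_eq]
  obtain (⟨i, γ⟩ | ⟨i, j, γ⟩) := r
  · ext1
    · funext a
      obtain ⟨l, rfl⟩ := g.right.surjective a
      rcases eq_or_ne l i with rfl | hl <;>
        simp [elt, conj_inl, tG, wphi_apply, *]
    · simp [elt, conj_inl, tG]
  · simp only [elt, conj_inr, tS_eq]
    ext1
    · funext a
      obtain ⟨l, rfl⟩ := g.right.surjective a
      rcases eq_or_ne l i with rfl | hi <;> rcases eq_or_ne l j with rfl | hj <;>
        simp [wphi_apply, mul_assoc, Equiv.swap_apply_of_ne_of_ne, *]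
    · exact (Equiv.mul_swap_eq_swap_mul _ _ _).symm

theorem exists_coord_conj (g : WP Γ N) (r : ReflIndex Γ N) : ∃ δ : Γ, ∀ v,
    coord (conj g r) (wreathRep Γ N g v) = stdRep Γ δ (coord r v) := by
  obtain (⟨i, γ⟩ | ⟨i, j, γ⟩) := r
  · exact ⟨g.left (g.right i), fun v => by simp [coord, conj_inl, wreathRep_apply]⟩
  · refine ⟨g.left (g.right i), fun v => ?_⟩
    simp only [conj_inr, coord_inr_apply, wreathRep_apply, map_sub, Equiv.Perm.coe_inv,
      Equiv.symm_apply_apply]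
    simp [← Module.End.mul_apply, ← map_mul, mul_assoc]

theorem coeff_conj [DecidableEq Γ] (k : ℂ) {c : Γ → ℂ} (hc : ∀ γ δ : Γ, c (δ * γ * δ⁻¹) = c γ)
    (g : WP Γ N) (r : ReflIndex Γ N) : coeff k c (conj g r) = coeff k c r := by
  obtain (⟨i, γ⟩ | ⟨i, j, γ⟩) := r
  · simp [coeff, conj_inl, Function.update_apply, hc, mul_inv_eq_one]
  · simp [coeff, conj_inr]

theorem sub_wreathRep_tG (i : Fin N) (γ : Γ) (v : Fin N → Fin 2 → ℂ) :
    v - wreathRep Γ N (tG i γ) v = Pi.single i (v i - stdRep Γ γ (v i)) := by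
  funext a
  rcases eq_or_ne a i with rfl | ha <;> simp [wreathRep_apply, tG, *]

theorem sub_wreathRep_tS {i j : Fin N} (hij : i ≠ j) (γ : Γ) (v : Fin N → Fin 2 → ℂ) :
    v - wreathRep Γ N (tS i j γ) v = Pi.single i (v i - stdRep Γ γ⁻¹ (v j))
      - Pi.single j (stdRep Γ γ (v i - stdRep Γ γ⁻¹ (v j))) := by
  funext a
  simp only [tS_eq, Pi.sub_apply, wreathRep_apply]
  rcases eq_or_ne a i with rfl | hi
  · simp [hij]
  rcases eq_or_ne a j with rfl | hj
  · simp [hi]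
  simp [hi, hj, Equiv.swap_apply_of_ne_of_ne]

theorem exists_sub_wreathRep_elt [DecidableEq Γ] {k : ℂ} {c : Γ → ℂ} {r : ReflIndex Γ N}
    (hr : coeff k c r ≠ 0) : ∃ J : (Fin 2 → ℂ) →ₗ[ℂ] (Fin N → Fin 2 → ℂ),
      ∀ v, v - wreathRep Γ N (elt r) v = J (coord r v) := by
  obtain (⟨i, γ⟩ | ⟨i, j, γ⟩) := r
  · refine ⟨LinearMap.single ℂ _ i ∘ₗ (LinearMap.id - stdRep Γ γ), fun v => ?_⟩
    simp only [elt, coord, sub_wreathRep_tG, LinearMap.comp_apply, LinearMap.sub_apply,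
      LinearMap.id_apply, LinearMap.single_apply, LinearMap.proj_apply]
  · have hij : i ≠ j := by
      rintro rfl
      simp [coeff] at hr
    refine ⟨LinearMap.single ℂ (fun _ => Fin 2 → ℂ) i - LinearMap.single ℂ _ j ∘ₗ stdRep Γ γ,
      fun v => ?_⟩
    simp only [elt, coord_inr_apply, sub_wreathRep_tS hij, LinearMap.comp_apply,
      LinearMap.sub_apply, LinearMap.single_apply]

end ReflIndex

open ReflIndex

variable [DecidableEq Γ]

variable (N) in
/-- The datum of which `H_{1,k,c}(Γ_N)` is the Drinfeld Hecke algebra. -/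
def wreathDatum (k : ℂ) {c : Γ → ℂ} (hc : ∀ γ δ : Γ, c (δ * γ * δ⁻¹) = c γ) :
    DrinfeldHeckeDatum ℂ (WP Γ N) (Fin N → Fin 2 → ℂ) (ReflIndex Γ N) where
  ρ := wreathRep Γ N
  refl := elt
  form r := coeff k c r • symplForm.compl₁₂ (coord r) (coord r)
  conj := conj
  refl_conj := elt_conj
  form_conj g r u v := by
    obtain ⟨δ, hδ⟩ := exists_coord_conj g r
    simp only [LinearMap.smul_apply, LinearMap.compl₁₂_apply, coeff_conj k hc, hδ,
      symplForm_stdRep]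
  form_isAlt r u := by
    rw [LinearMap.smul_apply, LinearMap.smul_apply, LinearMap.compl₁₂_apply, symplForm_isAlt,
      smul_zero]
  form_jacobi r u v w := by
    rcases eq_or_ne (coeff k c r) 0 with hr | hr
    · simp [hr]
    obtain ⟨J, hJ⟩ := exists_sub_wreathRep_elt hr
    simp only [hJ, LinearMap.smul_apply, LinearMap.compl₁₂_apply, smul_assoc, ← smul_add,
      ← map_smul J, ← map_add J, symplForm_jacobi, map_zero, smul_zero]

section Curvature

variable [Fintype Γ] {A : Type*} [Ring A] [Algebra ℂ A] (φ : WP Γ N →* A)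
  (k : ℂ) {c : Γ → ℂ} (hc : ∀ γ δ : Γ, c (δ * γ * δ⁻¹) = c γ)

theorem sum_form_inr (u v : Fin N → Fin 2 → ℂ) :
    ∑ p : Fin N × Fin N × Γ, (wreathDatum N k hc).form (.inr p) u v • φ (elt (.inr p)) =
      (k / 2) • ∑ i, ∑ j with j ≠ i, ∑ γ : Γ,
        (symplForm (u i) (v i) - symplForm (stdRep Γ γ (u i)) (v j)) • φ (tS i j γ) := by
  let half (p : Fin N × Fin N × Γ) : A := if p.2.1 ≠ p.1 then
    (symplForm (u p.1) (v p.1) - symplForm (stdRep Γ p.2.2 (u p.1)) (v p.2.1))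
      • φ (tS p.1 p.2.1 p.2.2) else 0
  let flip : Equiv.Perm (Fin N × Fin N × Γ) :=
    ⟨fun p => (p.2.1, p.1, p.2.2⁻¹), fun p => (p.2.1, p.1, p.2.2⁻¹),
      fun p => by simp, fun p => by simp⟩
  have form_eq (p : Fin N × Fin N × Γ) :
      (wreathDatum N k hc).form (.inr p) u v • φ (elt (.inr p)) =
        (k / 4) • (half p + half (flip p)) := by
    obtain ⟨i, j, γ⟩ := p
    rcases eq_or_ne i j with rfl | hij
    · simp [wreathDatum, coeff, half, flip]
    simp only [wreathDatum, LinearMap.smul_apply, LinearMap.compl₁₂_apply, symplForm_coord_inr,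
      smul_assoc, coeff, elt, half, flip, Equiv.coe_fn_mk, if_neg hij, if_pos hij, if_pos hij.symm,
      tS_symm hij, add_smul]
  calc
    _ = (k / 4) • (∑ p, half p + ∑ p, half (flip p)) := by
      simp only [form_eq, ← Finset.smul_sum, Finset.sum_add_distrib]
    _ = (k / 2) • ∑ p, half p := by
      rw [Equiv.sum_comp flip half, ← two_smul ℂ, smul_smul]
      ring_nf
    _ = _ := by
      simp only [Fintype.sum_prod_type, half, Finset.sum_filter, Finset.sum_ite_irrel,
        Finset.sum_const_zero]

theorem wreathDatum_curvature (u v : Fin N → Fin 2 → ℂ) :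
    (wreathDatum N k hc).curvature φ u v =
      ∑ i, symplForm (u i) (v i) • ∑ γ, Function.update c 1 1 γ • φ (tG i γ)
        + (k / 2) • ∑ i, ∑ j with j ≠ i, ∑ γ : Γ,
          (symplForm (u i) (v i) - symplForm (stdRep Γ γ (u i)) (v j)) • φ (tS i j γ) := by
  rw [DrinfeldHeckeDatum.curvature_apply, Fintype.sum_sum_type]
  refine congrArg₂ _ ?_ (sum_form_inr φ k hc u v)
  rw [Fintype.sum_prod_type]
  refine Finset.sum_congr rfl fun i _ => ?_
  rw [Finset.smul_sum]
  refine Finset.sum_congr rfl fun γ _ => ?_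
  simp only [wreathDatum, coeff, coord, elt, LinearMap.smul_apply, LinearMap.compl₁₂_apply,
    LinearMap.proj_apply, smul_smul, smul_eq_mul, mul_comm]

theorem curvature_single_same (i : Fin N) (u v : Fin 2 → ℂ) :
    (wreathDatum N k hc).curvature φ (Pi.single i u) (Pi.single i v) =
      symplForm u v • (1 + (k / 2) • ∑ j with j ≠ i, ∑ γ : Γ, φ (tS i j γ)
        + ∑ γ with γ ≠ 1, c γ • φ (tG i γ)) := by
  have sum_update : ∑ γ, Function.update c 1 1 γ • φ (tG i γ) =
      1 + ∑ γ with γ ≠ 1, c γ • φ (tG i γ) := by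
    rw [← Finset.add_sum_erase _ _ (Finset.mem_univ 1), Finset.filter_ne']
    refine congrArg₂ _ (by simp [tG]) (Finset.sum_congr rfl fun γ hγ => ?_)
    rw [Function.update_of_ne (Finset.ne_of_mem_erase hγ)]
  rw [wreathDatum_curvature, Finset.sum_eq_single i, Finset.sum_eq_single i, sum_update]
  · rw [Finset.sum_congr (s₁ := Finset.univ.filter (· ≠ i)) rfl fun j hj => by
      rw [Pi.single_eq_of_ne (Finset.mem_filter.1 hj).2]]
    simp only [Pi.single_eq_same, map_zero, sub_zero, ← Finset.smul_sum]
    module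
  all_goals simp +contextual

theorem curvature_single_of_ne {i j : Fin N} (hij : i ≠ j) (u v : Fin 2 → ℂ) :
    (wreathDatum N k hc).curvature φ (Pi.single i u) (Pi.single j v) =
      (-(k / 2)) • ∑ γ : Γ, symplForm (stdRep Γ γ u) v • φ (tS i j γ) := by
  have symplForm_diag (a : Fin N) :
      symplForm ((Pi.single i u : Fin N → _) a) ((Pi.single j v : Fin N → _) a) = 0 := by
    rcases eq_or_ne a i with rfl | ha <;> simp [*]
  simp only [wreathDatum_curvature, symplForm_diag, zero_smul, Finset.sum_const_zero, zero_add,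
    zero_sub, neg_smul, Finset.sum_neg_distrib, smul_neg]
  rw [Finset.sum_eq_single i, Finset.sum_eq_single j]
  · simp
  all_goals simp +contextual [hij.symm]

end Curvature

section Presentation

variable (N) in
/-- The basis `x_1, y_1, …, x_N, y_N` of `V`, with the lexicographic order on its indices. -/
def vecBasis : Basis (Fin N ×ₗ Fin 2) ℂ (Fin N → Fin 2 → ℂ) :=
  (Pi.basis fun _ => Pi.basisFun ℂ (Fin 2)).reindex ((Equiv.sigmaEquivProd _ _).trans toLex)

theorem vecBasis_toLex (i : Fin N) (p : Fin 2) :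
    vecBasis N (toLex (i, p)) = Pi.single i (Pi.single p 1) := by
  simp [vecBasis]

theorem sum_smul_map_vecBasis {W : Type*} [AddCommGroup W] [Module ℂ W]
    (f : (Fin N → Fin 2 → ℂ) →ₗ[ℂ] W) (v : Fin N → Fin 2 → ℂ) :
    ∑ i, ∑ p, v i p • f (vecBasis N (toLex (i, p))) = f v := by
  have sum_smul : ∑ i, ∑ p, v i p • vecBasis N (toLex (i, p)) = v := by
    ext a q
    fin_cases q <;> simp [vecBasis_toLex, Pi.single_apply, Finset.sum_apply, ite_apply]
  conv_rhs => rw [← sum_smul]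
  simp only [map_sum, map_smul]

variable [Fintype Γ] (k : ℂ) (c : Γ → ℂ)

theorem hG_mul (g h : WP Γ N) : hG Γ N k c (g * h) = hG Γ N k c g * hG Γ N k c h :=
  (RingQuot.mkAlgHom_rel ℂ (HRel.grp_mul g h)).symm.trans (map_mul _ _ _)

theorem hG_one : hG Γ N k c 1 = 1 :=
  (RingQuot.mkAlgHom_rel ℂ HRel.grp_one).trans (map_one _)

/-- The canonical map `V → H_{1,k,c}(Γ_N)`. -/
def hV : (Fin N → Fin 2 → ℂ) →ₗ[ℂ] HN Γ N k c :=
  (vecBasis N).constr ℂ fun a => hX Γ N k c (ofLex a).1 (ofLex a).2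

theorem hV_vecBasis (i : Fin N) (p : Fin 2) :
    hV k c (vecBasis N (toLex (i, p))) = hX Γ N k c i p := by
  simp [hV]

theorem mkAlgHom_nV (v : Fin N → Fin 2 → ℂ) :
    RingQuot.mkAlgHom ℂ (HRel Γ N k c) (nV Γ N v) = hV k c v := by
  rw [← sum_smul_map_vecBasis (hV k c), nV]
  simp only [map_sum, map_smul, hV_vecBasis]
  rfl

theorem hG_mul_hV (g : WP Γ N) (v : Fin N → Fin 2 → ℂ) :
    hG Γ N k c g * hV k c v = hV k c (wreathRep Γ N g v) * hG Γ N k c g := by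
  have conj : hG Γ N k c g * hV k c v * hG Γ N k c g⁻¹ = hV k c (wreathRep Γ N g v) := by
    have := RingQuot.mkAlgHom_rel ℂ (HRel.grp_conj (k := k) (c := c) g v)
    rwa [map_mul, map_mul, mkAlgHom_nV, mkAlgHom_nV] at this
  rw [← conj, mul_assoc, ← hG_mul, inv_mul_cancel, hG_one, mul_one]

variable {c} (hc : ∀ γ δ : Γ, c (δ * γ * δ⁻¹) = c γ)

variable (Γ N) in
/-- `hG` as a monoid homomorphism. -/
def hGHom (c : Γ → ℂ) : WP Γ N →* HN Γ N k c where
  toFun := hG Γ N k c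
  map_one' := hG_one k c
  map_mul' := hG_mul k c

theorem hX_commutator (i : Fin N) :
    hX Γ N k c i 0 * hX Γ N k c i 1 - hX Γ N k c i 1 * hX Γ N k c i 0 =
      (wreathDatum N k hc).curvature (hGHom Γ N k c) (Pi.single i (Pi.single 0 1))
        (Pi.single i (Pi.single 1 1)) := by
  have r1 := RingQuot.mkAlgHom_rel ℂ (HRel.r1 (k := k) (c := c) i)
  simp only [map_sub, map_mul, map_add, map_one, map_smul, map_sum] at r1
  rw [curvature_single_same, symplForm_single_zero_one, one_smul]
  exact r1

theorem hV_single_commutator {i j : Fin N} (hij : i ≠ j) (u v : Fin 2 → ℂ) :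
    hV k c (Pi.single i u) * hV k c (Pi.single j v)
        - hV k c (Pi.single j v) * hV k c (Pi.single i u) =
      (wreathDatum N k hc).curvature (hGHom Γ N k c) (Pi.single i u) (Pi.single j v) := by
  have r2 := RingQuot.mkAlgHom_rel ℂ (HRel.r2 (k := k) (c := c) i j hij u v)
  simp only [map_sub, map_mul, map_smul, map_sum, mkAlgHom_nV] at r2
  rw [curvature_single_of_ne _ _ _ hij]
  exact r2

theorem commutatorDefect_hV :
    (wreathDatum N k hc).commutatorDefect (hGHom Γ N k c) (hV k c) = 0 := by
  have isAlt := (wreathDatum N k hc).commutatorDefect_isAlt (hGHom Γ N k c) (hV k c)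
  refine bilin_eq_zero_of_isAlt_of_lt (vecBasis N) isAlt fun a b hba => ?_
  obtain ⟨⟨i, p⟩, rfl⟩ := toLex.surjective a
  obtain ⟨⟨j, q⟩, rfl⟩ := toLex.surjective b
  rcases eq_or_ne i j with rfl | hij
  · obtain ⟨rfl, rfl⟩ : p = 1 ∧ q = 0 := by
      have hqp : q < p := by simpa [Prod.Lex.toLex_lt_toLex] using hba
      lia
    rw [← isAlt.neg, neg_eq_zero, DrinfeldHeckeDatum.commutatorDefect_apply, hV_vecBasis,
      hV_vecBasis, hX_commutator k hc, vecBasis_toLex, vecBasis_toLex, sub_self]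
  · rw [DrinfeldHeckeDatum.commutatorDefect_apply, vecBasis_toLex, vecBasis_toLex,
      hV_single_commutator k hc hij, sub_self]

variable (N) in
/-- The realization in `H_{1,k,c}(Γ_N)` itself. -/
def wreathRealization : HeckeRealization (wreathDatum N k hc) (HN Γ N k c) where
  grp := hGHom Γ N k c
  vec := hV k c
  grp_mul_vec := hG_mul_hV k c
  commutator u v := by
    rw [← sub_eq_zero, ← DrinfeldHeckeDatum.commutatorDefect_apply, commutatorDefect_hV]
    rfl

variable {k hc} {A : Type*} [Ring A] [Algebra ℂ A] (R : HeckeRealization (wreathDatum N k hc) A)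

/-- The map from the free algebra determined by a realization. -/
def freeLift : FreeAlgebra ℂ (WP Γ N ⊕ Fin N × Fin 2) →ₐ[ℂ] A :=
  FreeAlgebra.lift ℂ (Sum.elim R.grp fun a => R.vec (vecBasis N (toLex a)))

theorem freeLift_nG (g : WP Γ N) : freeLift R (nG Γ N g) = R.grp g := by
  simp [freeLift, nG]

theorem freeLift_nX (i : Fin N) (p : Fin 2) :
    freeLift R (nX Γ N i p) = R.vec (vecBasis N (toLex (i, p))) := by
  simp [freeLift, nX]

theorem freeLift_nV (v : Fin N → Fin 2 → ℂ) : freeLift R (nV Γ N v) = R.vec v := by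
  rw [← sum_smul_map_vecBasis R.vec, nV]
  simp only [map_sum, map_smul, freeLift_nX]

theorem freeLift_eq_of_HRel {a b : FreeAlgebra ℂ (WP Γ N ⊕ Fin N × Fin 2)}
    (h : HRel Γ N k c a b) : freeLift R a = freeLift R b := by
  induction h with
  | grp_mul g h => rw [map_mul, freeLift_nG, freeLift_nG, freeLift_nG, map_mul]
  | grp_one => rw [freeLift_nG, map_one, map_one]
  | grp_conj g v =>
    rw [map_mul, map_mul, freeLift_nG, freeLift_nG, freeLift_nV, freeLift_nV, R.grp_mul_vec,
      mul_assoc, ← map_mul, mul_inv_cancel, map_one, mul_one]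
    rfl
  | r1 i =>
    simp only [map_sub, map_mul, map_add, map_one, map_smul, map_sum, freeLift_nG, freeLift_nX]
    rw [R.commutator, vecBasis_toLex, vecBasis_toLex, curvature_single_same,
      symplForm_single_zero_one, one_smul]
  | r2 i j hij u v =>
    simp only [map_sub, map_mul, map_smul, map_sum, freeLift_nG, freeLift_nV]
    rw [R.commutator, curvature_single_of_ne _ _ _ hij]
    rfl

/-- The homomorphism from `H_{1,k,c}(Γ_N)` determined by a realization. -/
def liftHN : HN Γ N k c →ₐ[ℂ] A :=
  RingQuot.liftAlgHom ℂ ⟨freeLift R, fun _ _ => freeLift_eq_of_HRel R⟩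

theorem liftHN_grp (g : WP Γ N) : liftHN R ((wreathRealization N k hc).grp g) = R.grp g :=
  (RingQuot.liftAlgHom_mkAlgHom_apply ..).trans (freeLift_nG R g)

theorem liftHN_vec (v : Fin N → Fin 2 → ℂ) :
    liftHN R ((wreathRealization N k hc).vec v) = R.vec v := by
  refine (congrArg _ (mkAlgHom_nV k c v).symm).trans ?_
  exact (RingQuot.liftAlgHom_mkAlgHom_apply ..).trans (freeLift_nV R v)

variable (N k hc)

theorem adjoin_wreathRealization :
    Algebra.adjoin ℂ (Set.range (wreathRealization N k hc).grp ∪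
      Set.range (wreathRealization N k hc).vec) = ⊤ := by
  have surj := RingQuot.mkAlgHom_surjective ℂ (HRel Γ N k c)
  rw [eq_top_iff, ← (AlgHom.range_eq_top _).2 surj, ← Algebra.map_top,
    ← FreeAlgebra.adjoin_range_ι, AlgHom.map_adjoin]
  refine Algebra.adjoin_mono ?_
  rintro _ ⟨_, ⟨g | ⟨i, p⟩, rfl⟩, rfl⟩
  · exact .inl ⟨g, rfl⟩
  · exact .inr ⟨_, hV_vecBasis k c i p⟩

end Presentation

section NormalWord

variable (N) in
/-- The multiset of variables of the monomial with given exponents. -/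
def exponentEquiv : (Fin N × Fin 2 → ℕ) ≃ Multiset (Fin N ×ₗ Fin 2) :=
  (toLex.arrowCongr (.refl ℕ)).trans
    (Finsupp.equivFunOnFinite.symm.trans Multiset.toFinsupp.symm.toEquiv)

theorem count_exponentEquiv (e : Fin N × Fin 2 → ℕ) (a : Fin N × Fin 2) :
    (exponentEquiv N e).count (toLex a) = e a := by
  simp [exponentEquiv]

/-- The word `x_1^{a_1} y_1^{b_1} ⋯ x_N^{a_N} y_N^{b_N}`, as the list of its letters. -/
def normalWord (e : Fin N × Fin 2 → ℕ) : List (Fin N ×ₗ Fin 2) :=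
  (List.finRange N).flatMap fun i =>
    .replicate (e (i, 0)) (toLex (i, 0)) ++ .replicate (e (i, 1)) (toLex (i, 1))

theorem pairwise_le_normalWord (e : Fin N × Fin 2 → ℕ) : (normalWord e).Pairwise (· ≤ ·) := by
  rw [normalWord, List.pairwise_flatMap]
  refine ⟨fun i _ => ?_, (List.pairwise_lt_finRange N).imp fun {i j} hij => ?_⟩
  · simp [List.pairwise_append, List.pairwise_replicate, Prod.Lex.toLex_le_toLex]
  · simp only [List.mem_append, List.mem_replicate]
    rintro _ (⟨-, rfl⟩ | ⟨-, rfl⟩) _ (⟨-, rfl⟩ | ⟨-, rfl⟩) <;>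
      exact (Prod.Lex.toLex_lt_toLex.2 (.inl hij)).le

theorem coe_normalWord (e : Fin N × Fin 2 → ℕ) :
    (normalWord e : Multiset (Fin N ×ₗ Fin 2)) = exponentEquiv N e := by
  ext a
  obtain ⟨⟨i, p⟩, rfl⟩ := toLex.surjective a
  rw [count_exponentEquiv, normalWord, ← Multiset.coe_bind, Multiset.count_bind,
    Multiset.map_coe, Multiset.sum_coe, ← Fin.sum_univ_def]
  simp only [← Multiset.coe_add, Multiset.coe_replicate, Multiset.count_add,
    Multiset.count_replicate, toLex_inj, Prod.mk.injEq]
  fin_cases p <;> simp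

theorem sort_exponentEquiv (e : Fin N × Fin 2 → ℕ) : (exponentEquiv N e).sort = normalWord e := by
  rw [← coe_normalWord, Multiset.coe_sort]
  exact List.mergeSort_eq_self _ (pairwise_le_normalWord e)

end NormalWord

theorem monomial_exponentEquiv [Fintype Γ] {k : ℂ} {c : Γ → ℂ}
    (hc : ∀ γ δ : Γ, c (δ * γ * δ⁻¹) = c γ) (g : WP Γ N) (e : Fin N × Fin 2 → ℕ) :
    (wreathRealization N k hc).monomial (vecBasis N) (g, exponentEquiv N e) =
      pbwMono Γ N k c g e := by
  have vec_vecBasis (i : Fin N) (p : Fin 2) :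
      (wreathRealization N k hc).vec (vecBasis N (toLex (i, p))) = hX Γ N k c i p :=
    hV_vecBasis k c i p
  rw [HeckeRealization.monomial, sort_exponentEquiv, HeckeRealization.word, normalWord, pbwMono,
    List.map_flatMap]
  simp only [List.flatMap, List.map_append, List.map_replicate, vec_vecBasis, List.prod_flatten,
    List.map_map, Function.comp_def, List.prod_append, List.prod_replicate]
  rfl

end WreathProduct

/-- PBW property: the elements
`g · x₁^{a₁} y₁^{b₁} x₂^{a₂} y₂^{b₂} ⋯ x_N^{a_N} y_N^{b_N}`, for `g ∈ Γ_N` and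
`a_i, b_i ∈ ℕ`, form a `ℂ`-vector space basis of `H_{1,k,c}(Γ_N)`: they are linearly
independent and they span. -/
theorem stmt_3 (Γ : Subgroup SL2) [Fintype Γ] [DecidableEq Γ] (N : ℕ) (k : ℂ) (c : Γ → ℂ)
    (hc : ∀ γ δ : Γ, c (δ * γ * δ⁻¹) = c γ) :
    LinearIndependent ℂ
      (fun p : WP Γ N × (Fin N × Fin 2 → ℕ) => pbwMono Γ N k c p.1 p.2) ∧
    Submodule.span ℂ
      (Set.range fun p : WP Γ N × (Fin N × Fin 2 → ℕ) => pbwMono Γ N k c p.1 p.2) = ⊤ := by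
  have pbwMono_eq : (fun p : WP Γ N × (Fin N × Fin 2 → ℕ) => pbwMono Γ N k c p.1 p.2) =
      (wreathRealization N k hc).monomial (vecBasis N) ∘
        (Equiv.refl (WP Γ N)).prodCongr (exponentEquiv N) :=
    funext fun p => (monomial_exponentEquiv hc p.1 p.2).symm
  rw [pbwMono_eq, EquivLike.range_comp]
  constructor
  · let R := (wreathDatum N k hc).normalRealization (vecBasis N)
    exact (HeckeRealization.linearIndependent_monomial (vecBasis N) (liftHN R) (liftHN_grp R)
      (liftHN_vec R)).comp _ (Equiv.injective _)
  · exact HeckeRealization.span_monomial_eq_top _ (vecBasis N) (adjoin_wreathRealization N k hc)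
end
end

section
/- Let Γ be a finite group and G = S_N ⋉ Γ^N the wreath product. If ρ: G → GL(W) is a finite-dimensional complex representation of G whose restriction to the subgroup S_N is irreducible, then there exists a group character χ: Γ → ℂ^× such that ρ((γ_1,…,γ_N)) = χ(γ_1)⋯χ(γ_N) · Id_W for all (γ_1,…,γ_N) ∈ Γ^N; in particular Γ^N acts on W by an S_N-invariant character. -/
/-!
For `γ ∈ Γ` let `a i` be the action on `W` of the element of `Γ^N` with `γ` in place `i` and `1`
elsewhere. The `a i` commute and are permuted by `S_N`, so `S_N` permutes their joint eigenspaces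
by permuting weights. The sum of all transpositions is central in the group algebra of `S_N`, hence
acts by a scalar. Apply it to a joint eigenvector `x` of weight `μ` with `μ i ≠ μ j`: exactly one
summand, `(i j) • x`, has weight `μ ∘ (i j)`, and the scalar multiple of `x` does not have this
weight, so `(i j) • x = 0`, which is absurd. Thus every joint eigenvector has a constant weight `c`.
Its joint eigenspace is then stable under `S_N`, hence is all of `W`, so that every `a i` is `c`.
-/

open Equiv Module Representation

section Combinatorics

variable {α : Type*} [DecidableEq α]

theorem isSwap_conj {τ : Perm α} (hτ : τ.IsSwap) (σ : Perm α) : (σ * τ * σ⁻¹).IsSwap := by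
  obtain ⟨p, q, hpq, rfl⟩ := hτ
  exact ⟨σ p, σ q, σ.injective.ne hpq, (swap_apply_apply σ p q).symm⟩

theorem eq_swap_of_comp_inv_eq {β : Type*} {μ : α → β} {i j : α} (hij : μ i ≠ μ j) {τ : Perm α}
    (hτ : τ.IsSwap) (h : μ ∘ ⇑τ⁻¹ = μ ∘ ⇑(swap i j)⁻¹) : τ = swap i j := by
  obtain ⟨p, q, -, rfl⟩ := hτ
  simp only [swap_inv] at h
  have moves_i : swap p q i ≠ i := fun hfix ↦ hij (by simpa [hfix] using congrFun h i)
  have moves_j : swap p q j ≠ j := fun hfix ↦ hij (by simpa [hfix] using (congrFun h j).symm)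
  have hi := (swap_apply_ne_self_iff.1 moves_i).2
  have hj := (swap_apply_ne_self_iff.1 moves_j).2
  have hne : i ≠ j := fun h ↦ hij (h ▸ rfl)
  rcases hi with rfl | rfl <;> rcases hj with rfl | rfl
  · exact absurd rfl hne
  · rfl
  · exact swap_comm _ _
  · exact absurd rfl hne

end Combinatorics

theorem commute_map_sum_of_conj_mem {G R : Type*} [Group G] [Semiring R] (f : G →* R)
    {s : Finset G} (hs : ∀ g, ∀ h ∈ s, g * h * g⁻¹ ∈ s) (g : G) :
    Commute (f g) (∑ h ∈ s, f h) := by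
  have hconj (h : G) : f g * f h = f (g * h * g⁻¹) * f g := by
    rw [← map_mul, ← map_mul, inv_mul_cancel_right]
  rw [Commute, SemiconjBy, Finset.mul_sum, Finset.sum_mul]
  exact Finset.sum_bij' (fun h _ ↦ g * h * g⁻¹) (fun h _ ↦ g⁻¹ * h * g) (hs g)
    (fun h hh ↦ by simpa using hs g⁻¹ h hh) (fun _ _ ↦ by group) (fun _ _ ↦ by group)
    fun h _ ↦ hconj h

theorem eq_zero_of_sum_mem_of_iSupIndep {R M κ α : Type*} [Ring R] [AddCommGroup M] [Module R M]
    {p : κ → Submodule R M} (hp : iSupIndep p) {s : Finset α} {w : α → κ} {y : α → M}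
    (hy : ∀ b ∈ s, y b ∈ p (w b)) {a : α} (ha : a ∈ s) (hinj : ∀ b ∈ s, w b = w a → b = a)
    {k : κ} (hk : k ≠ w a) (hsum : ∑ b ∈ s, y b ∈ p k) : y a = 0 := by
  classical
  refine Submodule.disjoint_def.1 (hp (w a)) _ (hy a ha) ?_
  rw [eq_sub_of_add_eq (Finset.add_sum_erase s y ha)]
  refine Submodule.sub_mem _ (Submodule.mem_iSup_of_mem k (Submodule.mem_iSup_of_mem hk hsum))
    (Submodule.sum_mem _ fun b hb ↦ ?_)
  obtain ⟨hba, hbs⟩ := Finset.mem_erase.1 hb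
  exact Submodule.mem_iSup_of_mem (w b) (Submodule.mem_iSup_of_mem (mt (hinj b hbs) hba) (hy b hbs))

section Irreducible

variable {K G V : Type*} [Field K] [AddCommGroup V] [Module K V]

theorem isIrreducible_of_forall_map_le [Monoid G] [Nontrivial V] {π : Representation K G V}
    (h : ∀ U : Submodule K V, (∀ g, U.map (π g) ≤ U) → U = ⊥ ∨ U = ⊤) : π.IsIrreducible where
  exists_pair_ne :=
    ⟨⊥, ⊤, fun h ↦ bot_ne_top (α := Submodule K V) (congrArg Subrepresentation.toSubmodule h)⟩
  eq_bot_or_eq_top U :=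
    (h U.toSubmodule fun g ↦ Submodule.map_le_iff_le_comap.2 (U.apply_mem_toSubmodule g)).imp
      (fun h ↦ Subrepresentation.toSubmodule_injective h)
      (fun h ↦ Subrepresentation.toSubmodule_injective h)

theorem eq_top_of_isIrreducible [Monoid G] (π : Representation K G V) [π.IsIrreducible]
    {U : Submodule K V} (hU : U ≠ ⊥) (hπU : ∀ g, ∀ x ∈ U, π g x ∈ U) : U = ⊤ :=
  congrArg Subrepresentation.toSubmodule <|
    (eq_bot_or_eq_top (⟨U, hπU⟩ : Subrepresentation π)).resolve_left
      fun h ↦ hU (congrArg Subrepresentation.toSubmodule h)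

theorem nontrivial_of_isIrreducible [Monoid G] (π : Representation K G V) [π.IsIrreducible] :
    Nontrivial V :=
  IsSimpleModule.nontrivial (MonoidAlgebra K G) π.asModule

theorem finiteDimensional_of_isIrreducible [Monoid G] [Finite G] (π : Representation K G V)
    [π.IsIrreducible] : FiniteDimensional K V :=
  show FiniteDimensional K π.asModule from Module.Finite.trans (MonoidAlgebra K G) π.asModule

theorem exists_eq_algebraMap_of_forall_commute [Monoid G] [IsAlgClosed K] [FiniteDimensional K V]
    (π : Representation K G V) [π.IsIrreducible] {T : End K V} (hT : ∀ g, Commute (π g) T) :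
    ∃ c : K, T = algebraMap K (End K V) c := by
  obtain ⟨c, hc⟩ := (IsIrreducible.algebraMap_intertwiningMap_bijective_of_isAlgClosed (ρ := π)).2
    ⟨T, fun g ↦ (hT g).eq.symm⟩
  exact ⟨c, (congrArg IntertwiningMap.toLinearMap hc).symm⟩

end Irreducible

section JointEigenspace

variable {ι K V : Type*} [Field K] [AddCommGroup V] [Module K V]

/-- The joint eigenspace of weight `μ` of a family `a` of endomorphisms: the vectors that are an
eigenvector of `a i` with eigenvalue `μ i` for every `i`, and `0`. -/
def jointEigenspace (a : ι → End K V) (μ : ι → K) : Submodule K V :=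
  ⨅ i, (a i).eigenspace (μ i)

variable {a : ι → End K V}

theorem mem_jointEigenspace {μ : ι → K} {x : V} :
    x ∈ jointEigenspace a μ ↔ ∀ i, a i x = μ i • x := by
  simp only [jointEigenspace, Submodule.mem_iInf, End.mem_eigenspace_iff]

theorem iSupIndep_jointEigenspace (ha : ∀ i j, Commute (a i) (a j)) :
    iSupIndep (jointEigenspace a) :=
  (End.independent_iInf_maxGenEigenspace_of_forall_mapsTo a fun i j ↦
    End.mapsTo_maxGenEigenspace_of_comm (ha j i)).mono fun _ ↦
      iInf_mono fun _ ↦ (End.genEigenspace _ _).mono le_top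

theorem exists_inf_eigenspace_ne_bot [IsAlgClosed K] [FiniteDimensional K V] {f : End K V}
    {U : Submodule K V} (hU : U ≠ ⊥) (hfU : ∀ x ∈ U, f x ∈ U) : ∃ c, U ⊓ f.eigenspace c ≠ ⊥ := by
  have : Nontrivial U := Submodule.nontrivial_iff_ne_bot.2 hU
  obtain ⟨c, hc⟩ := End.exists_eigenvalue (f.restrict hfU)
  obtain ⟨x, hx⟩ := hc.exists_hasEigenvector
  refine ⟨c, (Submodule.ne_bot_iff _).2 ⟨x, ⟨x.2, ?_⟩, by simpa using hx.2⟩⟩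
  exact End.mem_eigenspace_iff.2 (congrArg Subtype.val hx.apply_eq_smul)

-- On a minimal nonzero subspace stable under the family, every member has a stable nonzero
-- eigenspace and is therefore a scalar.
theorem exists_jointEigenspace_ne_bot [IsAlgClosed K] [FiniteDimensional K V] [Nontrivial V]
    (ha : ∀ i j, Commute (a i) (a j)) : ∃ μ, jointEigenspace a μ ≠ ⊥ := by
  obtain ⟨U, ⟨hU, haU⟩, hmin⟩ := exists_minimal_of_wellFoundedLT
    (fun U : Submodule K V ↦ U ≠ ⊥ ∧ ∀ i, ∀ x ∈ U, a i x ∈ U) ⟨⊤, top_ne_bot, by simp⟩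
  have hscalar (i : ι) : ∃ c, U ≤ (a i).eigenspace c := by
    obtain ⟨c, hc⟩ := exists_inf_eigenspace_ne_bot hU (haU i)
    have hstable (j : ι) : ∀ x ∈ U ⊓ (a i).eigenspace c, a j x ∈ U ⊓ (a i).eigenspace c :=
      fun x hx ↦ ⟨haU j x hx.1, End.mapsTo_genEigenspace_of_comm (ha i j) c 1 hx.2⟩
    exact ⟨c, (hmin ⟨hc, hstable⟩ inf_le_left).trans inf_le_right⟩
  choose μ hμ using hscalar
  exact ⟨μ, ne_bot_of_le_ne_bot hU (le_iInf hμ)⟩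

end JointEigenspace

section PermutedFamily

variable {ι K V : Type*} [Field K] [AddCommGroup V] [Module K V]
  {π : Representation K (Perm ι) V} {a : ι → End K V}

theorem apply_mem_jointEigenspace (hπa : ∀ σ i, π σ * a i = a (σ i) * π σ) (σ : Perm ι)
    {μ : ι → K} {x : V} (hx : x ∈ jointEigenspace a μ) :
    π σ x ∈ jointEigenspace a (μ ∘ ⇑σ⁻¹) := by
  rw [mem_jointEigenspace] at hx ⊢
  intro i
  have hi := LinearMap.congr_fun (hπa σ (σ⁻¹ i)) x
  rw [End.mul_apply, End.mul_apply, ← Perm.mul_apply, mul_inv_cancel, Perm.one_apply, hx,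
    map_smul] at hi
  exact hi.symm

variable [Finite ι] [IsAlgClosed K] [π.IsIrreducible]

theorem weight_apply_eq_of_jointEigenspace_ne_bot (ha : ∀ i j, Commute (a i) (a j))
    (hπa : ∀ σ i, π σ * a i = a (σ i) * π σ) {μ : ι → K} (hμ : jointEigenspace a μ ≠ ⊥)
    (i j : ι) : μ i = μ j := by
  classical
  have := Fintype.ofFinite ι
  have := finiteDimensional_of_isIrreducible π
  by_contra hij
  obtain ⟨x, hx, hx0⟩ := Submodule.exists_mem_ne_zero_of_ne_bot hμ
  let swaps : Finset (Perm ι) := {τ | τ.IsSwap}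
  have mem_swaps {τ : Perm ι} : τ ∈ swaps ↔ τ.IsSwap := by simp [swaps]
  obtain ⟨t, ht⟩ := exists_eq_algebraMap_of_forall_commute π <|
    commute_map_sum_of_conj_mem π (s := swaps) fun σ τ hτ ↦
      mem_swaps.2 (isSwap_conj (mem_swaps.1 hτ) σ)
  have hsum : ∑ τ ∈ swaps, π τ x ∈ jointEigenspace a μ := by
    rw [← LinearMap.sum_apply, ht, algebraMap_end_apply]
    exact Submodule.smul_mem _ t hx
  have hne : μ ≠ μ ∘ ⇑(swap i j)⁻¹ := fun h ↦ hij (by simpa using congrFun h i)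
  have hswap : π (swap i j) x = 0 :=
    eq_zero_of_sum_mem_of_iSupIndep (iSupIndep_jointEigenspace ha)
      (fun τ _ ↦ apply_mem_jointEigenspace hπa τ hx)
      (mem_swaps.2 ⟨i, j, fun h ↦ hij (h ▸ rfl), rfl⟩)
      (fun τ hτ h ↦ eq_swap_of_comp_inv_eq hij (mem_swaps.1 hτ) h) hne hsum
  exact hx0 ((π.apply_bijective _).1 (hswap.trans (map_zero _).symm))

theorem exists_forall_eq_algebraMap (ha : ∀ i j, Commute (a i) (a j))
    (hπa : ∀ σ i, π σ * a i = a (σ i) * π σ) : ∃ c : K, ∀ i, a i = algebraMap K (End K V) c := by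
  have := finiteDimensional_of_isIrreducible π
  have := nontrivial_of_isIrreducible π
  obtain ⟨μ, hμ⟩ := exists_jointEigenspace_ne_bot ha
  have hconst := weight_apply_eq_of_jointEigenspace_ne_bot ha hπa hμ
  have htop : jointEigenspace a μ = ⊤ := eq_top_of_isIrreducible π hμ fun σ x hx ↦ by
    have hμσ : μ ∘ ⇑σ⁻¹ = μ := funext fun i ↦ hconst _ _
    simpa only [hμσ] using apply_mem_jointEigenspace hπa σ hx
  have hscalar (i : ι) : a i = algebraMap K (End K V) (μ i) :=
    LinearMap.ext fun x ↦ mem_jointEigenspace.1 (htop ▸ Submodule.mem_top) i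
  rcases isEmpty_or_nonempty ι with _ | ⟨⟨i₀⟩⟩
  · exact ⟨0, isEmptyElim⟩
  · exact ⟨μ i₀, fun i ↦ by rw [hscalar, hconst i i₀]⟩

end PermutedFamily

theorem exists_monoidHom_eq_algebraMap_prod {ι K V Γ : Type*} [Fintype ι] [DecidableEq ι] [Field K]
    [IsAlgClosed K] [AddCommGroup V] [Module K V] [Monoid Γ] {π : Representation K (Perm ι) V}
    [π.IsIrreducible] {R : Representation K (ι → Γ) V}
    (hπR : ∀ σ i γ, π σ * R (Pi.mulSingle i γ) = R (Pi.mulSingle (σ i) γ) * π σ) :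
    ∃ χ : Γ →* K, ∀ f, R f = algebraMap K (End K V) (∏ i, χ (f i)) := by
  rcases isEmpty_or_nonempty ι with _ | ⟨⟨i₀⟩⟩
  · exact ⟨1, fun f ↦ by simp [Subsingleton.elim f 1]⟩
  have hcomm (γ : Γ) (i j : ι) : Commute (R (Pi.mulSingle i γ)) (R (Pi.mulSingle j γ)) := by
    rcases eq_or_ne i j with rfl | hij
    · exact Commute.refl _
    · exact (Pi.mulSingle_commute (f := fun _ ↦ Γ) hij γ γ).map R
  choose c hc using fun γ ↦ exists_forall_eq_algebraMap (hcomm γ) fun σ i ↦ hπR σ i γ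
  have := nontrivial_of_isIrreducible π
  have hinj := (algebraMap K (End K V)).injective
  let χ : Γ →* K :=
    { toFun := c
      map_one' := hinj (by rw [← hc 1 i₀, Pi.mulSingle_one, map_one, map_one])
      map_mul' := fun γ δ ↦ hinj (by
        rw [← hc _ i₀, Pi.mulSingle_mul, map_mul, map_mul, hc γ, hc δ]) }
  let S : (ι → Γ) →* End K V :=
    (algebraMap K (End K V) : K →* End K V).comp (∏ i, χ.comp (Pi.evalMonoidHom (fun _ ↦ Γ) i))
  have hRS : R = S := MonoidHom.pi_ext fun i γ ↦ by
    rw [show R (Pi.mulSingle i γ) = algebraMap K (End K V) (χ γ) from hc γ i]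
    simp [S, Pi.mulSingle_apply, apply_ite]
  exact ⟨χ, fun f ↦ by rw [hRS]; simp [S]⟩

theorem wphi_mulSingle {Γ : Type} [Group Γ] {N : ℕ} (σ : Perm (Fin N)) (i : Fin N) (γ : Γ) :
    wphi Γ N σ (Pi.mulSingle i γ) = Pi.mulSingle (σ i) γ := by
  funext j
  change (Pi.mulSingle i γ : Fin N → Γ) (σ.symm j) = _
  simp only [Pi.mulSingle_apply, symm_apply_eq]

theorem stmt_4_general {N : ℕ} {Γ : Type} [Group Γ] {K W : Type*} [Field K] [IsAlgClosed K]
    [AddCommGroup W] [Module K W] (ρ : Representation K (WP Γ N) W)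
    (hirr : IsIrreducible (ρ.comp (SemidirectProduct.inr : Perm (Fin N) →* WP Γ N))) :
    ∃ χ : Γ →* Kˣ, ∀ f : Fin N → Γ,
      ρ (SemidirectProduct.inl f) = (∏ i : Fin N, (χ (f i) : K)) • LinearMap.id := by
  obtain ⟨χ, hχ⟩ := exists_monoidHom_eq_algebraMap_prod
    (π := ρ.comp (SemidirectProduct.inr : Perm (Fin N) →* WP Γ N))
    (R := ρ.comp (SemidirectProduct.inl : (Fin N → Γ) →* WP Γ N)) fun σ i γ ↦ by
      simp only [MonoidHom.comp_apply, ← map_mul, ← wphi_mulSingle, SemidirectProduct.inl_aut,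
        map_inv, inv_mul_cancel_right]
  exact ⟨χ.toHomUnits, fun f ↦ (hχ f).trans (Algebra.algebraMap_eq_smul_one _)⟩

/-- let `Γ` be a finite group and `G = S_N ⋉ Γ^N`.  If `ρ : G → GL(W)` is a
finite dimensional complex representation of `G` whose restriction to the subgroup `S_N`
is irreducible, then there is a character `χ : Γ → ℂˣ` with
`ρ (γ_1, …, γ_N) = χ(γ_1)⋯χ(γ_N) · Id_W` for all `(γ_1, …, γ_N) ∈ Γ^N`. -/
theorem stmt_4 (N : ℕ) (Γ : Type) [Group Γ] [Finite Γ]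
    (W : Type) [AddCommGroup W] [Module ℂ W] [FiniteDimensional ℂ W] [Nontrivial W]
    (ρ : Representation ℂ (WP Γ N) W)
    (hirr : ∀ U : Submodule ℂ W,
      (∀ σ : Equiv.Perm (Fin N), U.map (ρ (SemidirectProduct.inr σ)) ≤ U) → U = ⊥ ∨ U = ⊤) :
    ∃ χ : Γ →* ℂˣ, ∀ f : Fin N → Γ,
      ρ (SemidirectProduct.inl f) = (∏ i : Fin N, (χ (f i) : ℂ)) • LinearMap.id := by
  exact stmt_4_general ρ (isIrreducible_of_forall_map_le hirr)
end
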